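/- arXiv:1910.00485 — 4 statements merged into one kernel-verified Lean document; each statement's English description precedes it below -/
import Mathlib

section
/- Let P be a finite nonempty poset and let m := a(P) be the number of antichains of P (including the empty antichain). Then there is a constant C = C(P) > 0 such that for every n ≥ 1, the number of injective poset homomorphisms from P into 𝒫(n) satisfies | |inj-hom_P(𝒫(n))| − m^n | ≤ C·(m−1)^n; in particular |inj-hom_P(𝒫(n))| = (1+o(1))·m^n as n → ∞. -/
open Classical in
/-- The finset of all antichains (including the empty antichain) of a finite poset `P`. -/
noncomputable def antichains (P : Type*) [Fintype P] [PartialOrder P] : Finset (Finset P) :=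
  Finset.univ.filter (fun A => IsAntichain (· ≤ ·) (A : Set P))

/-!
Recording for each `i` the set of points `p` with `i ∈ φ p` turns a monotone map `φ : P → 𝒫(n)` into
an `n`-tuple of upper sets of `P`, and `φ` is injective exactly when the tuple separates the points
of `P`. Upper sets correspond to antichains, so there are `m ^ n` tuples. A tuple that does not
separate some `p ≠ q` omits every upper set containing exactly one of them, and as such an upper set
exists, at most `(m - 1) ^ n` tuples fail at a given pair. There are at most `|P| ^ 2` pairs.
-/

section Counting

variable {P S Q ι : Type*} [Finite S] [Finite ι]

theorem ncard_setOf_comp_eq_comp_le {u v : S → Q} (huv : u ≠ v) :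
    {f : ι → S | u ∘ f = v ∘ f}.ncard ≤ (Nat.card S - 1) ^ Nat.card ι := by
  obtain ⟨s, hs⟩ := Function.ne_iff.mp huv
  calc {f : ι → S | u ∘ f = v ∘ f}.ncard
      = Nat.card {f : ι → S // ∀ i, u (f i) = v (f i)} := by
        simp only [← Nat.card_coe_set_eq, Set.coe_ofPred, funext_iff, Function.comp_apply]
    _ = Nat.card {s // u s = v s} ^ Nat.card ι := by
        rw [Nat.card_congr (Equiv.subtypePiEquivPi (p := fun _ s => u s = v s)), Nat.card_fun]
    _ ≤ (Nat.card S - 1) ^ Nat.card ι := by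
        have hlt : Nat.card {s // u s = v s} < Nat.card S := Finite.card_subtype_lt hs
        exact Nat.pow_le_pow_left (Nat.le_sub_one_of_lt hlt) _

variable [Finite P] {e : P → S → Q}

theorem ncard_setOf_not_injective_comp_le (he : Function.Injective e) :
    {f : ι → S | ¬ Function.Injective fun p => e p ∘ f}.ncard ≤
      Nat.card P ^ 2 * (Nat.card S - 1) ^ Nat.card ι := by
  classical
  have := Fintype.ofFinite P
  let D : Finset (P × P) := Finset.univ.offDiag
  have hD : D.card ≤ Nat.card P ^ 2 := by
    simpa only [Nat.card_eq_fintype_card, Fintype.card_prod, sq] using D.card_le_univ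
  have hcover : {f : ι → S | ¬ Function.Injective fun p => e p ∘ f} ⊆
      ⋃ x ∈ D, {f : ι → S | e x.1 ∘ f = e x.2 ∘ f} := by
    intro f hf
    obtain ⟨p, q, hpq, hne⟩ := Function.not_injective_iff.mp hf
    exact Set.mem_biUnion (x := (p, q)) (by simpa [D] using hne) hpq
  calc {f : ι → S | ¬ Function.Injective fun p => e p ∘ f}.ncard
      ≤ (⋃ x ∈ D, {f : ι → S | e x.1 ∘ f = e x.2 ∘ f}).ncard := Set.ncard_le_ncard hcover
    _ ≤ ∑ x ∈ D, {f : ι → S | e x.1 ∘ f = e x.2 ∘ f}.ncard := D.set_ncard_biUnion_le _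
    _ ≤ D.card * (Nat.card S - 1) ^ Nat.card ι := by
        refine Finset.sum_le_card_nsmul _ _ _ fun x hx => ncard_setOf_comp_eq_comp_le (he.ne ?_)
        exact (Finset.mem_offDiag.mp hx).2.2
    _ ≤ Nat.card P ^ 2 * (Nat.card S - 1) ^ Nat.card ι := Nat.mul_le_mul_right _ hD

theorem abs_ncard_setOf_injective_comp_sub_pow_le [Nonempty S] (he : Function.Injective e) :
    |({f : ι → S | Function.Injective fun p => e p ∘ f}.ncard : ℝ) -
        (Nat.card S : ℝ) ^ Nat.card ι| ≤
      (Nat.card P : ℝ) ^ 2 * ((Nat.card S : ℝ) - 1) ^ Nat.card ι := by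
  have htotal := Set.ncard_add_ncard_compl {f : ι → S | Function.Injective fun p => e p ∘ f}
  rw [Nat.card_fun] at htotal
  have hbound := ncard_setOf_not_injective_comp_le (ι := ι) he
  rw [← Nat.cast_pow, ← htotal, Nat.cast_add, sub_add_cancel_left, abs_neg, Nat.abs_cast,
    ← Nat.cast_pred Nat.card_pos]
  exact_mod_cast hbound

end Counting

section UpperSet

variable {P ι : Type*}

theorem upperClosure_setOf_minimal [Preorder P] [WellFoundedLT P] (U : UpperSet P) :
    upperClosure {x | Minimal (· ∈ U) x} = U := by
  ext x
  refine ⟨?_, fun hx => ?_⟩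
  · rintro ⟨a, ha, hax⟩
    exact U.upper hax ha.prop
  · obtain ⟨a, hax, ha⟩ := exists_minimal_le_of_wellFoundedLT (· ∈ U) x hx
    exact ⟨a, ha, hax⟩

/-- The bijection between antichains and upper sets of a well-founded poset: an antichain generates
an upper set, from which it is recovered as the set of minimal elements. -/
def antichainEquivUpperSet [PartialOrder P] [WellFoundedLT P] :
    {A : Set P // IsAntichain (· ≤ ·) A} ≃ UpperSet P where
  toFun A := upperClosure A
  invFun U := ⟨{x | Minimal (· ∈ U) x}, setOfPred_minimal_antichain _⟩
  left_inv A := Subtype.ext <| Set.ext fun _ => A.2.minimal_mem_upperClosure_iff_mem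
  right_inv := upperClosure_setOf_minimal

theorem card_antichains [Fintype P] [PartialOrder P] :
    (antichains P).card = Nat.card (UpperSet P) := by
  classical
  rw [antichains, ← Fintype.card_subtype, ← Nat.card_eq_fintype_card]
  exact Nat.card_congr <|
    (Fintype.finsetEquivSet.subtypeEquiv fun _ => Iff.rfl).trans antichainEquivUpperSet

theorem injective_mem_upperSet [PartialOrder P] :
    Function.Injective fun (p : P) (U : UpperSet P) => p ∈ U := by
  intro p q hpq
  have hmem (U : UpperSet P) : p ∈ U ↔ q ∈ U := iff_of_eq (congrFun hpq U)
  exact le_antisymm ((hmem (.Ici p)).mp le_rfl) ((hmem (.Ici q)).mpr le_rfl)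

open Classical in
/-- A monotone map `φ` from `P` to the finite power set of `ι` is the same as a family of upper sets
of `P` indexed by `ι`, the one at `i` being `{p | i ∈ φ p}`. -/
noncomputable def monotoneEquivUpperSets [Preorder P] [Fintype ι] :
    {φ : P → Finset ι // Monotone φ} ≃ (ι → UpperSet P) where
  toFun φ i := ⟨{p | i ∈ φ.1 p}, fun _ _ hpq hp => φ.2 hpq hp⟩
  invFun f := ⟨fun p => {i | p ∈ f i}, fun _ _ hpq =>
    Finset.monotone_filter_right _ fun i _ hp => (f i).upper hpq hp⟩
  left_inv φ := by
    ext p i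
    simp [← SetLike.mem_coe]
  right_inv f := by
    ext i p
    simp [← SetLike.mem_coe]

theorem injective_iff_injective_monotoneEquivUpperSets [Preorder P] [Fintype ι]
    (φ : {φ : P → Finset ι // Monotone φ}) :
    Function.Injective φ.1 ↔
      Function.Injective fun p => (fun U : UpperSet P => p ∈ U) ∘ monotoneEquivUpperSets φ := by
  have hcomp : (fun p => (fun U : UpperSet P => p ∈ U) ∘ monotoneEquivUpperSets φ) =
      (fun (s : Finset ι) i => i ∈ s) ∘ φ.1 := rfl
  have hmem : Function.Injective fun (s : Finset ι) i => i ∈ s :=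
    fun _ _ h => Finset.ext fun i => iff_of_eq (congrFun h i)
  rw [hcomp, hmem.of_comp_iff]

theorem card_monotone_injective_eq_ncard [Preorder P] [Finite ι] :
    Nat.card {φ : P → Finset ι // Monotone φ ∧ Function.Injective φ} =
      {f : ι → UpperSet P |
        Function.Injective fun p => (fun U : UpperSet P => p ∈ U) ∘ f}.ncard := by
  have := Fintype.ofFinite ι
  rw [← Nat.card_coe_set_eq]
  exact Nat.card_congr <| (Equiv.subtypeSubtypeEquivSubtypeInter _ _).symm.trans <|
    monotoneEquivUpperSets.subtypeEquiv injective_iff_injective_monotoneEquivUpperSets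

end UpperSet

theorem stmt0_general (P ι : Type*) [Fintype P] [PartialOrder P] [Fintype ι] :
    |(Nat.card {φ : P → Finset ι // Monotone φ ∧ Function.Injective φ} : ℝ) -
        ((antichains P).card : ℝ) ^ Fintype.card ι| ≤
      (Fintype.card P : ℝ) ^ 2 * (((antichains P).card : ℝ) - 1) ^ Fintype.card ι := by
  simpa only [card_monotone_injective_eq_ncard, card_antichains, Nat.card_eq_fintype_card] using
    abs_ncard_setOf_injective_comp_sub_pow_le (ι := ι) (injective_mem_upperSet (P := P))

/-- Counting injective poset homomorphisms from a fixed finite nonempty poset `P` into the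
Boolean lattice `𝒫(n)` (modelled as `Finset (Fin n)` ordered by inclusion):
with `m = a(P)` the number of antichains of `P`, there is a constant `C > 0` with
`| |inj-hom_P(𝒫(n))| - m^n | ≤ C (m-1)^n` for all `n ≥ 1`. -/
theorem stmt0 (P : Type) [Fintype P] [PartialOrder P] [Nonempty P] :
    ∃ C : ℝ, 0 < C ∧ ∀ n : ℕ, 1 ≤ n →
      |(Nat.card {φ : P → Finset (Fin n) // Monotone φ ∧ Function.Injective φ} : ℝ) -
          ((antichains P).card : ℝ) ^ n| ≤
        C * (((antichains P).card : ℝ) - 1) ^ n := by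
  refine ⟨(Fintype.card P : ℝ) ^ 2, by positivity, fun n _ => ?_⟩
  simpa only [Fintype.card_fin] using stmt0_general P (Fin n)
end

section
/- Let P be a finite poset with a(P) = m, with antichains enumerated as 𝒜(P) = {S_1,…,S_m} where S_m = ∅. Then: (a) for every ordered m-partition A = (A_1,…,A_m) of [n] in which every part A_j is nonempty, the map f_2(A) : P → 𝒫(n), f_2(A)(i) := ⋃{A_j : S_j ∩ D(i) ≠ ∅}, is an injective poset homomorphism from P to 𝒫(n), and moreover for all x, y ∈ P one has f_2(A)(x) ⊆ f_2(A)(y) if and only if x ≤_P y (so the image of f_2(A) is an induced copy of P in 𝒫(n)); and (b) the map A ↦ f_2(A) is injective on [m]^[n]_⋆. -/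
/-!
The blocks containing a ground element `a` can be read off from `f₂(A)`: if `a ∈ A j`, then
`{i | a ∈ f₂(A)(i)}` is the up-set generated by `S j`. An antichain is the set of minimal elements
of the up-set it generates, so `f₂(A)` determines the index `j` of the block of every `a`, which is
(b). For (a), an element of the block indexed by `{x}` lies in `f₂(A)(y)` exactly when `x ≤ y`.
-/

open Function

theorem upperClosure_injOn_isAntichain {P : Type*} [PartialOrder P] :
    Set.InjOn upperClosure {s : Set P | IsAntichain (· ≤ ·) s} := by
  intro s hs t ht hst
  ext p
  rw [← hs.minimal_mem_upperClosure_iff_mem, hst, ht.minimal_mem_upperClosure_iff_mem]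

section PartUnion

variable {P ι α : Type*}

/-- The map `f₂(A) : P → 𝒫(α)` of a family of parts `A j` labelled by subsets `S j` of `P`: the
union of the parts whose label meets `D(i) = {p | p ≤ i}`. The labels are arbitrary sets, and the
parts need not be a partition. -/
def partUnion [LE P] (S : ι → Set P) (A : ι → Set α) (i : P) : Set α :=
  ⋃ j, ⋃ (_ : ∃ p ∈ S j, p ≤ i), A j

section Preorder

variable [Preorder P] {S : ι → Set P} {A B : ι → Set α}

theorem mem_partUnion {a : α} {i : P} :
    a ∈ partUnion S A i ↔ ∃ j, i ∈ upperClosure (S j) ∧ a ∈ A j := by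
  simp only [partUnion, Set.mem_iUnion, exists_prop, mem_upperClosure]

theorem partUnion_monotone : Monotone (partUnion S A) := by
  intro x y hxy a ha
  obtain ⟨j, hx, haj⟩ := mem_partUnion.1 ha
  exact mem_partUnion.2 ⟨j, (upperClosure (S j)).upper hxy hx, haj⟩

theorem mem_partUnion_iff_mem_upperClosure (hA : Pairwise (Disjoint on A)) {a : α} {j : ι}
    (ha : a ∈ A j) {i : P} : a ∈ partUnion S A i ↔ i ∈ upperClosure (S j) := by
  refine mem_partUnion.trans ⟨?_, fun hi => ⟨j, hi, ha⟩⟩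
  rintro ⟨k, hi, hak⟩
  obtain rfl : j = k := hA.eq (Set.not_disjoint_iff.2 ⟨a, ha, hak⟩)
  exact hi

theorem partUnion_subset_partUnion_iff (hS : ∀ x, ∃ j, S j = {x}) (hA : Pairwise (Disjoint on A))
    (hne : ∀ j, (A j).Nonempty) {x y : P} : partUnion S A x ⊆ partUnion S A y ↔ x ≤ y := by
  refine ⟨fun hxy => ?_, fun hxy => partUnion_monotone hxy⟩
  obtain ⟨j, hj⟩ := hS x
  obtain ⟨a, ha⟩ := hne j
  have mem_iff (i : P) : a ∈ partUnion S A i ↔ x ≤ i := by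
    rw [mem_partUnion_iff_mem_upperClosure hA ha, hj, upperClosure_singleton, UpperSet.mem_Ici_iff]
  exact (mem_iff y).1 (hxy ((mem_iff x).2 le_rfl))

theorem le_of_partUnion_eq (hS : Injective fun j => upperClosure (S j))
    (hA : Pairwise (Disjoint on A)) (hB : Pairwise (Disjoint on B)) (hBcover : ∀ a, ∃ j, a ∈ B j)
    (hAB : partUnion S A = partUnion S B) : A ≤ B := by
  intro j a ha
  obtain ⟨k, hk⟩ := hBcover a
  have hjk : upperClosure (S j) = upperClosure (S k) := by
    ext i
    exact (mem_partUnion_iff_mem_upperClosure hA ha).symm.trans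
      (hAB ▸ mem_partUnion_iff_mem_upperClosure hB hk)
  exact hS hjk ▸ hk

theorem partUnion_injOn (hS : Injective fun j => upperClosure (S j)) :
    Set.InjOn (partUnion S)
      {A : ι → Set α | Pairwise (Disjoint on A) ∧ ∀ a, ∃ j, a ∈ A j} := by
  rintro A ⟨hA, hAcover⟩ B ⟨hB, hBcover⟩ hAB
  exact (le_of_partUnion_eq hS hA hB hBcover hAB).antisymm
    (le_of_partUnion_eq hS hB hA hAcover hAB.symm)

end Preorder

theorem partUnion_injective [PartialOrder P] {S : ι → Set P} {A : ι → Set α}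
    (hS : ∀ x, ∃ j, S j = {x}) (hA : Pairwise (Disjoint on A)) (hne : ∀ j, (A j).Nonempty) :
    Injective (partUnion S A) :=
  (OrderEmbedding.ofMapLEIff (partUnion S A) fun _ _ =>
    partUnion_subset_partUnion_iff hS hA hne).injective

theorem stmt3_general [PartialOrder P] {S : ι → Set P} (hS : ∀ j, IsAntichain (· ≤ ·) (S j))
    (hSinj : Injective S) (hSsingleton : ∀ x, ∃ j, S j = {x}) :
    (∀ A : ι → Set α, Pairwise (Disjoint on A) → (∀ j, (A j).Nonempty) →
      Injective (partUnion S A) ∧ ∀ x y, partUnion S A x ⊆ partUnion S A y ↔ x ≤ y) ∧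
    Set.InjOn (partUnion S) {A : ι → Set α | Pairwise (Disjoint on A) ∧ ∀ a, ∃ j, a ∈ A j} :=
  ⟨fun _ hA hne => ⟨partUnion_injective hSsingleton hA hne,
      fun _ _ => partUnion_subset_partUnion_iff hSsingleton hA hne⟩,
    partUnion_injOn fun _ _ hjk => hSinj (upperClosure_injOn_isAntichain (hS _) (hS _) hjk)⟩

end PartUnion

/-- Let `P` be a finite poset whose antichains are enumerated (bijectively) as
`S 0, …, S (m-1)` with the last one empty.  For an ordered `m`-partition
`A = (A 0, …, A (m-1))` of `[n]` define `f₂(A) : P → 𝒫(n)` by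
`f₂(A)(i) := ⋃ { A j : S j ∩ D(i) ≠ ∅ }` where `D(i) = {i' : i' ≤ i}`.  Then:
(a) if every part of `A` is nonempty, `f₂(A)` is an injective poset homomorphism whose image
is an induced copy of `P` in `𝒫(n)` (`f₂(A) x ⊆ f₂(A) y ↔ x ≤ y`); and
(b) `A ↦ f₂(A)` is injective on partitions with all parts nonempty. -/
theorem stmt3 (P : Type) [Fintype P] [PartialOrder P] (n m : ℕ) (hm : 0 < m)
    (S : Fin m → Finset P)
    (hSsurj : ∀ A : Finset P, IsAntichain (· ≤ ·) (A : Set P) ↔ ∃ j, S j = A)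
    (hSinj : Function.Injective S)
    (hSlast : S ⟨m - 1, by omega⟩ = ∅) :
    letI f₂ : (Fin m → Finset (Fin n)) → P → Set (Fin n) :=
      fun A i => ⋃ j, ⋃ (_ : ∃ p ∈ S j, p ≤ i), (A j : Set (Fin n))
    (∀ A : Fin m → Finset (Fin n),
        (∀ i j, i ≠ j → Disjoint (A i) (A j)) → (∀ x : Fin n, ∃ j, x ∈ A j) →
        (∀ j, (A j).Nonempty) →
        Function.Injective (f₂ A) ∧ (∀ x y : P, f₂ A x ⊆ f₂ A y ↔ x ≤ y)) ∧
    (∀ A B : Fin m → Finset (Fin n),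
        ((∀ i j, i ≠ j → Disjoint (A i) (A j)) ∧ (∀ x : Fin n, ∃ j, x ∈ A j) ∧
          ∀ j, (A j).Nonempty) →
        ((∀ i j, i ≠ j → Disjoint (B i) (B j)) ∧ (∀ x : Fin n, ∃ j, x ∈ B j) ∧
          ∀ j, (B j).Nonempty) →
        f₂ A = f₂ B → A = B) := by
  have pairwise_coe {A : Fin m → Finset (Fin n)} (hA : ∀ i j, i ≠ j → Disjoint (A i) (A j)) :
      Pairwise (Disjoint on fun j => (A j : Set (Fin n))) :=
    fun i j hij => Finset.disjoint_coe.2 (hA i j hij)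
  obtain ⟨embedding, injOn⟩ := stmt3_general (S := fun j => (S j : Set P)) (α := Fin n)
    (fun j => (hSsurj (S j)).2 ⟨j, rfl⟩) (Finset.coe_injective.comp hSinj)
    fun x => ((hSsurj {x}).1 (by simp)).imp fun j hj => by simp [hj]
  refine ⟨fun A hA _ hne => embedding _ (pairwise_coe hA) hne, ?_⟩
  rintro A B ⟨hA, hAcover, -⟩ ⟨hB, hBcover, -⟩ hAB
  exact Finset.coe_injective.comp_left
    (injOn ⟨pairwise_coe hA, hAcover⟩ ⟨pairwise_coe hB, hBcover⟩ hAB)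
end

section
/- Let P be a finite poset with antichains enumerated as 𝒜(P) = {S_1,…,S_m} (S_m = ∅), and let Q be a nonempty subset of P with the induced order and with antichains enumerated as 𝒜(Q) = {T_1,…,T_M} (T_M = ∅). For an ordered m-partition A = (A_1,…,A_m) of [n], define the Q-shadow partition ∂_Q(A) := (B_1,…,B_M) by B_k := ⋃_{j : ∂_Q S_j = T_k} A_j. Then ∂_Q(A) is an ordered M-partition of [n], and the restriction to Q of the map f_2 constructed from A for P coincides with the map f_2 constructed from ∂_Q(A) for Q; that is, for every i ∈ Q, ⋃{A_j : S_j ∩ D_P(i) ≠ ∅} = ⋃{B_k : T_k ∩ D_Q(i) ≠ ∅}, where D_P(i) = {i' ∈ P : i' ≤_P i} and D_Q(i) = Q ∩ D_P(i). -/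
/-- The upper shadow `∂_Q S` of an antichain `S` of `P` inside a subset `Q ⊆ P`. -/
def upperShadow {P : Type*} [PartialOrder P] (Q : Set P) (S : Set P) : Set P :=
  {y | y ∈ Q ∧ (∃ x ∈ S, x ≤ y) ∧ ∀ z ∈ Q, z < y → ∀ x ∈ S, ¬ x ≤ z}

/-!
The upper shadow `∂_Q S` consists of the minimal elements of `Q` above `S`. When `Q` is
well-founded, every `i ∈ Q` above `S` has such an element below it, so `S` and `∂_Q S` meet the
down-set of `i` simultaneously. The block of `x` under `∂_Q(A)` thus has a label that meets the
down-set of `i` exactly when the label of its block under `A` does.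
-/

section Fibers

open Function

variable {ι κ α X : Type*} {g : ι → α} {T : κ → α} {A : ι → Set X}

theorem pairwise_disjoint_iUnion_fiber (hA : Pairwise (Disjoint on A)) :
    Pairwise (Disjoint on fun a ↦ ⋃ j, ⋃ (_ : g j = a), A j) := by
  intro a b hab
  simp only [onFun, Set.disjoint_iUnion_left, Set.disjoint_iUnion_right]
  rintro j rfl j' rfl
  exact hA (ne_of_apply_ne g hab)

theorem iUnion_iUnion_fiber (hgT : Set.range g ⊆ Set.range T) (p : α → Prop) :
    ⋃ k, ⋃ (_ : p (T k)), ⋃ j, ⋃ (_ : g j = T k), A j = ⋃ j, ⋃ (_ : p (g j)), A j := by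
  ext x
  simp only [Set.mem_iUnion]
  constructor
  · rintro ⟨k, hp, j, hjk, hx⟩
    exact ⟨j, hjk ▸ hp, hx⟩
  · rintro ⟨j, hp, hx⟩
    obtain ⟨k, hk⟩ := hgT ⟨j, rfl⟩
    exact ⟨k, hk ▸ hp, j, hk.symm, hx⟩

end Fibers

section Shadow

variable {P : Type*}

theorem exists_le_minimal_of_isWF [Preorder P] {s : Set P} (hs : s.IsWF) {a : P} (ha : a ∈ s) :
    ∃ b ≤ a, Minimal (· ∈ s) b := by
  have hsa : (s ∩ Set.Iic a).IsWF := hs.mono Set.inter_subset_left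
  have hne : (s ∩ Set.Iic a).Nonempty := ⟨a, ha, le_rfl⟩
  obtain ⟨hbs, hba⟩ := hsa.min_mem hne
  refine ⟨hsa.min hne, hba, minimal_iff_forall_lt.2 ⟨hbs, fun c hcb hcs ↦ ?_⟩⟩
  exact hsa.not_lt_min hne ⟨hcs, hcb.le.trans hba⟩ hcb

variable [PartialOrder P] {Q S : Set P}

theorem mem_upperShadow_iff_minimal {y : P} :
    y ∈ upperShadow Q S ↔ Minimal (· ∈ Q ∩ upperClosure S) y := by
  simp only [upperShadow, Set.mem_ofPred_eq, minimal_iff_forall_lt, Set.mem_inter_iff,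
    SetLike.mem_coe, mem_upperClosure]
  grind

theorem upperShadow_subset : upperShadow Q S ⊆ Q := fun _ hy ↦ hy.1

theorem isAntichain_upperShadow : IsAntichain (· ≤ ·) (upperShadow Q S) :=
  (setOfPred_minimal_antichain _).subset fun _ ↦ mem_upperShadow_iff_minimal.1

theorem exists_mem_upperShadow_le_iff (hQ : Q.IsWF) {i : P} (hi : i ∈ Q) :
    (∃ y ∈ upperShadow Q S, y ≤ i) ↔ ∃ x ∈ S, x ≤ i := by
  constructor
  · rintro ⟨y, ⟨-, ⟨x, hx, hxy⟩, -⟩, hyi⟩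
    exact ⟨x, hx, hxy.trans hyi⟩
  · intro hSi
    obtain ⟨y, hyi, hy⟩ :=
      exists_le_minimal_of_isWF (hQ.mono Set.inter_subset_left) ⟨hi, mem_upperClosure.2 hSi⟩
    exact ⟨y, mem_upperShadow_iff_minimal.2 hy, hyi⟩

end Shadow

section ShadowPartition

open Function

variable {P ι κ X : Type*} [PartialOrder P]

/-- The map `f₂` of a family `A` of blocks labelled by subsets `S j` of `P`. The same definition
serves for a subposet `Q ⊆ P`: at `i ∈ Q` a label `S j ⊆ Q` meets `D_Q(i)` iff it meets `D_P(i)`. -/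
def labelledUnion (S : ι → Set P) (A : ι → Set X) (i : P) : Set X :=
  ⋃ j, ⋃ (_ : ∃ p ∈ S j, p ≤ i), A j

/-- The `Q`-shadow `∂_Q(A)` of a family `A` labelled by `S`, as a family labelled by `T`.
It regroups the blocks of `A` according to the upper shadows of their labels. -/
def shadowPartition (Q : Set P) (S : ι → Set P) (T : κ → Set P) (A : ι → Set X) (k : κ) : Set X :=
  ⋃ j, ⋃ (_ : upperShadow Q (S j) = T k), A j

variable {Q : Set P} {S : ι → Set P} {T : κ → Set P} {A : ι → Set X}

theorem pairwise_disjoint_shadowPartition (hT : Injective T) (hA : Pairwise (Disjoint on A)) :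
    Pairwise (Disjoint on shadowPartition Q S T A) :=
  (pairwise_disjoint_iUnion_fiber hA).comp_of_injective hT

theorem iUnion_shadowPartition (hST : ∀ j, upperShadow Q (S j) ∈ Set.range T) :
    ⋃ k, shadowPartition Q S T A k = ⋃ j, A j := by
  simpa only [shadowPartition, Set.iUnion_true] using
    iUnion_iUnion_fiber (A := A) (Set.range_subset_iff.2 hST) fun _ ↦ True

theorem labelledUnion_shadowPartition (hQ : Q.IsWF) (hST : ∀ j, upperShadow Q (S j) ∈ Set.range T)
    {i : P} (hi : i ∈ Q) :
    labelledUnion T (shadowPartition Q S T A) i = labelledUnion S A i :=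
  calc
    labelledUnion T (shadowPartition Q S T A) i
      = ⋃ j, ⋃ (_ : ∃ p ∈ upperShadow Q (S j), p ≤ i), A j :=
        iUnion_iUnion_fiber (Set.range_subset_iff.2 hST) fun U ↦ ∃ p ∈ U, p ≤ i
    _ = labelledUnion S A i := by
      simp only [exists_mem_upperShadow_le_iff hQ hi, labelledUnion]

theorem stmt4_general (hQ : Q.IsWF) (hTinj : Injective T)
    (hTsurj : ∀ U ⊆ Q, IsAntichain (· ≤ ·) U → U ∈ Set.range T)
    (hdisj : Pairwise (Disjoint on A)) (hcover : ⋃ j, A j = Set.univ) :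
    (Pairwise (Disjoint on shadowPartition Q S T A) ∧
      ⋃ k, shadowPartition Q S T A k = Set.univ) ∧
    ∀ i ∈ Q, labelledUnion S A i = labelledUnion T (shadowPartition Q S T A) i := by
  have hST (j : ι) : upperShadow Q (S j) ∈ Set.range T :=
    hTsurj _ upperShadow_subset isAntichain_upperShadow
  exact ⟨⟨pairwise_disjoint_shadowPartition hTinj hdisj, (iUnion_shadowPartition hST).trans hcover⟩,
    fun i hi ↦ (labelledUnion_shadowPartition hQ hST hi).symm⟩

end ShadowPartition

/-- Let `P` be a finite poset with antichains enumerated bijectively as `S 0, …, S (m-1)`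
(`S` last empty), and let `Q ⊆ P` be nonempty with its antichains (antichains of `P`
contained in `Q`) enumerated bijectively as `T 0, …, T (M-1)` (`T` last empty).  For an
ordered `m`-partition `A` of `[n]`, the `Q`-shadow `∂_Q(A) = B` given by
`B k = ⋃ { A j : ∂_Q (S j) = T k }` is an ordered `M`-partition of `[n]`, and the map
`f₂` built from `A` for `P`, restricted to `Q`, coincides with the map `f₂` built from
`B` for `Q`: for all `i ∈ Q`,
`⋃ {A j : S j ∩ D_P(i) ≠ ∅} = ⋃ {B k : T k ∩ D_Q(i) ≠ ∅}`. -/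
theorem stmt4 (P : Type) [Fintype P] [PartialOrder P]
    (Q : Set P) (hQ : Q.Nonempty) (n m M : ℕ) (hm : 0 < m) (hM : 0 < M)
    (S : Fin m → Finset P)
    (hSsurj : ∀ A : Finset P, IsAntichain (· ≤ ·) (A : Set P) ↔ ∃ j, S j = A)
    (hSinj : Function.Injective S)
    (hSlast : S ⟨m - 1, by omega⟩ = ∅)
    (T : Fin M → Finset P)
    (hTsurj : ∀ A : Finset P,
      ((A : Set P) ⊆ Q ∧ IsAntichain (· ≤ ·) (A : Set P)) ↔ ∃ k, T k = A)
    (hTinj : Function.Injective T)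
    (hTlast : T ⟨M - 1, by omega⟩ = ∅)
    (A : Fin m → Finset (Fin n))
    (hdisj : ∀ i j, i ≠ j → Disjoint (A i) (A j))
    (hcover : ∀ x : Fin n, ∃ j, x ∈ A j) :
    letI B : Fin M → Set (Fin n) :=
      fun k => ⋃ j, ⋃ (_ : upperShadow Q (S j : Set P) = (T k : Set P)), (A j : Set (Fin n))
    ((∀ k k', k ≠ k' → Disjoint (B k) (B k')) ∧ (⋃ k, B k) = Set.univ) ∧
    (∀ i ∈ Q,
      (⋃ j, ⋃ (_ : ∃ p ∈ S j, p ≤ i), (A j : Set (Fin n))) =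
        (⋃ k, ⋃ (_ : ∃ p ∈ T k, p ≤ i), B k)) :=
  stmt4_general Q.toFinite.isWF (Finset.coe_injective.comp hTinj)
    (fun U hUQ hU ↦ by
      lift U to Finset P using U.toFinite
      exact ((hTsurj U).1 ⟨hUQ, hU⟩).imp fun _ ↦ congrArg _)
    (fun j j' h ↦ Finset.disjoint_coe.2 (hdisj j j' h))
    (Set.iUnion_eq_univ_iff.2 hcover)
end

section
/- Let P be a finite nonempty poset and let c be a fixed real number with 0 < c < c_⋆(P). Set p = p(n) = e^{−c·n}. Then with high probability P is an induced subposet of the random poset (𝒫(n,p), ⊆); that is, the probability that there exists an injective map φ : P → 𝒫(n,p) such that for all x, y ∈ P, φ(x) ⊆ φ(y) if and only if x ≤_P y, tends to 1 as n → ∞. -/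
open Classical in
/-- The antichains of the subposet `Q ⊆ P`, i.e. antichains of `P` contained in `Q`. -/
noncomputable def antichainsIn {P : Type*} [Fintype P] [PartialOrder P] (Q : Set P) :
    Finset (Finset P) :=
  (antichains P).filter (fun A => (A : Set P) ⊆ Q)

/-- A weighting `α ∈ Δ_{a(P)}`: a nonnegative function on the antichains of `P`
(extended by `0` off the antichains) summing to `1`. -/
def IsWeighting {P : Type*} [Fintype P] [PartialOrder P] (α : Finset P → ℝ) : Prop :=
  (∀ A ∈ antichains P, 0 ≤ α A) ∧ (∀ A ∉ antichains P, α A = 0) ∧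
    ∑ A ∈ antichains P, α A = 1

open Classical in
/-- The shadow weighting `∂_Q(α)`: the coordinate of `∂_Q(α)` at an antichain `T` of `Q`
is the sum of `α` over all antichains of `P` whose upper shadow in `Q` is `T`. -/
noncomputable def shadowWeight {P : Type*} [Fintype P] [PartialOrder P]
    (α : Finset P → ℝ) (Q : Set P) (T : Finset P) : ℝ :=
  ∑ A ∈ (antichains P).filter (fun B : Finset P => upperShadow Q (B : Set P) = (T : Set P)), α A

/-- The critical exponent `c_{α,P}(Q) = H_{a(Q)}(∂_Q(α)) / |Q|` of a subposet `Q` of `P`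
with respect to a weighting `α` (natural logarithm; `0 log 0 = 0`). -/
noncomputable def critExp {P : Type*} [Fintype P] [PartialOrder P]
    (α : Finset P → ℝ) (Q : Set P) : ℝ :=
  (∑ T ∈ antichainsIn Q, -(shadowWeight α Q T * Real.log (shadowWeight α Q T))) /
    (Q.ncard : ℝ)

/-- The critical exponent `c_⋆(P) = max_{α ∈ Δ_{a(P)}} min_{∅ ≠ Q ⊆ P} c_{α,P}(Q)`,
expressed as `sup {c ≥ 0 : ∃ α ∈ Δ_{a(P)}, ∀ ∅ ≠ Q ⊆ P, c ≤ c_{α,P}(Q)}`. -/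
noncomputable def critStar (P : Type*) [Fintype P] [PartialOrder P] : ℝ :=
  sSup {c : ℝ | 0 ≤ c ∧ ∃ α : Finset P → ℝ, IsWeighting α ∧
    ∀ Q : Set P, Q.Nonempty → c ≤ critExp α Q}

open Classical in
/-- The probability, under the product of Bernoulli(`p`) measures on `{0,1}^{𝒫(n)}`
(each element of `𝒫(n)` retained independently with probability `p`), of an event `E`. -/
noncomputable def cubeProb (n : ℕ) (p : ℝ) (E : Set (Finset (Fin n) → Bool)) : ℝ :=
  ∑ ω ∈ Finset.univ.filter (fun ω : Finset (Fin n) → Bool => ω ∈ E),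
    ∏ X : Finset (Fin n), (if ω X = true then p else 1 - p)

/-!
Choose a weighting `α` of the antichains of `P` that beats the exponent `c` on every `Q ⊆ P`; by
continuity it may be taken positive on all antichains. Draw antichains `f 1, …, f n` independently
from `α` and let `x : P` go to the set of all `i` for which `x` lies above an element of `f i`.
With high probability this is an order embedding, and the copy of `P` it produces is typical: by a
Chernoff bound on the log-likelihood, whose mean is minus the entropy of the shadow weighting, any
prescribed image of `Q` is hit with probability at most `exp (-h n) ^ |Q|`, for some `h > c`. Hence
the `α`-weighted number of typical copies retained in the random poset has second moment at most
`(1 + |P| exp (-(h - c) n)) ^ |P|` times its squared mean, up to a factor tending to `1`, and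
Cauchy–Schwarz shows that with high probability some copy is retained.
-/

open Finset Filter Topology

section ProductWeights

variable {ι κ : Type*} [Fintype ι] [Fintype κ] {a : ι → ℝ}

lemma exists_pos_sum_mul_exp_lt_one {u : ι → ℝ} (ha : ∑ i, a i = 1)
    (hau : ∑ i, a i * u i < 0) : ∃ s > 0, ∑ i, a i * Real.exp (s * u i) < 1 := by
  have hderiv : HasDerivAt (fun s : ℝ => ∑ i, a i * Real.exp (s * u i)) (∑ i, a i * u i) 0 := by
    simpa using HasDerivAt.fun_sum fun i (_ : i ∈ univ) =>
      (((hasDerivAt_id (0 : ℝ)).mul_const (u i)).exp).const_mul (a i)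
  have hslope := (hasDerivAt_iff_tendsto_slope.1 hderiv).mono_left (nhdsGT_le_nhdsNE 0)
  obtain ⟨s, hs, hs0 : 0 < s⟩ :=
    ((hslope.eventually_lt_const hau).and self_mem_nhdsWithin).exists
  refine ⟨s, hs0, ?_⟩
  simp only [slope_def_field, zero_mul, Real.exp_zero, mul_one, ha, sub_zero] at hs
  linarith [(div_lt_iff₀ hs0).1 hs]

lemma sum_prod_filter_exp_lt_prod_le (ha : ∀ i, 0 ≤ a i) (b : ι → ℝ) (t : ℝ) {s : ℝ} (hs : 0 ≤ s)
    (n : ℕ) :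
    ∑ f : Fin n → ι with Real.exp (-(t * n)) < ∏ j, b (f j), ∏ j, a (f j) ≤
      (∑ i, a i * Real.exp (s * (Real.log (b i) + t))) ^ n := by
  have hprod (f : Fin n → ι) : 0 ≤ ∏ j, a (f j) := prod_nonneg fun j _ => ha (f j)
  rw [Fintype.sum_pow, sum_filter]
  refine sum_le_sum fun f _ => ?_
  rw [prod_mul_distrib, ← Real.exp_sum, ← mul_sum]
  split_ifs with hlt
  · refine le_mul_of_one_le_right (hprod f) (Real.one_le_exp (mul_nonneg hs ?_))
    have hne : ∀ j ∈ univ, b (f j) ≠ 0 :=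
      prod_ne_zero_iff.1 ((Real.exp_pos _).trans hlt).ne'
    have hlog := Real.log_lt_log (Real.exp_pos _) hlt
    rw [Real.log_exp, Real.log_prod hne] at hlog
    simp only [sum_add_distrib, sum_const, card_univ, Fintype.card_fin, nsmul_eq_mul]
    linarith
  · exact mul_nonneg (hprod f) (Real.exp_pos _).le

lemma tendsto_sum_prod_filter_exp_lt_prod (ha : ∀ i, 0 ≤ a i) (ha1 : ∑ i, a i = 1)
    {b : ι → ℝ} {t : ℝ} (h : ∑ i, a i * Real.log (b i) < -t) :
    Tendsto (fun n : ℕ => ∑ f : Fin n → ι with Real.exp (-(t * n)) < ∏ j, b (f j), ∏ j, a (f j))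
      atTop (𝓝 0) := by
  have hmean : ∑ i, a i * (Real.log (b i) + t) < 0 := by
    simp only [mul_add, sum_add_distrib, ← sum_mul, ha1]
    linarith
  obtain ⟨s, hs0, hs⟩ := exists_pos_sum_mul_exp_lt_one ha1 hmean
  refine squeeze_zero (fun n => sum_nonneg fun f _ => prod_nonneg fun j _ => ha (f j))
    (sum_prod_filter_exp_lt_prod_le ha b t hs0.le) (tendsto_pow_atTop_nhds_zero_of_lt_one ?_ hs)
  exact sum_nonneg fun i _ => mul_nonneg (ha i) (Real.exp_pos _).le

lemma tendsto_sum_prod_filter_forall_ne [DecidableEq ι] (ha : ∀ i, 0 ≤ a i)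
    (ha1 : ∑ i, a i = 1) {x : ι} (hx : 0 < a x) :
    Tendsto (fun n : ℕ => ∑ f : Fin n → ι with ∀ j, f j ≠ x, ∏ j, a (f j)) atTop (𝓝 0) := by
  have hsum (n : ℕ) :
      ∑ f : Fin n → ι with ∀ j, f j ≠ x, ∏ j, a (f j) = (∑ i ∈ {x}ᶜ, a i) ^ n := by
    rw [sum_pow']
    congr 1
    ext f
    simp
  have hlt : ∑ i ∈ {x}ᶜ, a i < 1 := by
    rw [← ha1, ← sum_compl_add_sum {x}, sum_singleton]
    linarith
  simp only [hsum]
  exact tendsto_pow_atTop_nhds_zero_of_lt_one (sum_nonneg fun i _ => ha i) hlt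

lemma sum_filter_exists_mem_le [DecidableEq ι] (ha : ∀ i, 0 ≤ a i) (B : κ → Finset ι) :
    ∑ i with ∃ k, i ∈ B k, a i ≤ ∑ k, ∑ i ∈ B k, a i := by
  have hswap : ∑ k, ∑ i ∈ B k, a i = ∑ i, ∑ k, if i ∈ B k then a i else 0 := by
    rw [sum_comm]
    simp only [sum_ite_mem, univ_inter]
  have hterm (i : ι) (k : κ) : 0 ≤ if i ∈ B k then a i else 0 := by
    split_ifs
    exacts [ha i, le_rfl]
  rw [hswap, sum_filter]
  refine sum_le_sum fun i _ => ?_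
  split_ifs with hi
  · obtain ⟨k, hk⟩ := hi
    simpa [hk] using single_le_sum (fun k _ => hterm i k) (mem_univ k)
  · exact sum_nonneg fun k _ => hterm i k

lemma tendsto_sum_prod_filter_forall_notMem [DecidableEq ι] (ha : ∀ i, 0 ≤ a i)
    (ha1 : ∑ i, a i = 1) {B : κ → ∀ n, Finset (Fin n → ι)}
    (hB : ∀ k, Tendsto (fun n => ∑ f ∈ B k n, ∏ j, a (f j)) atTop (𝓝 0)) :
    Tendsto (fun n => ∑ f : Fin n → ι with ∀ k, f ∉ B k n, ∏ j, a (f j)) atTop (𝓝 1) := by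
  have hprod {n : ℕ} (f : Fin n → ι) : 0 ≤ ∏ j, a (f j) := prod_nonneg fun j _ => ha (f j)
  have htotal (n : ℕ) : ∑ f : Fin n → ι, ∏ j, a (f j) = 1 := by
    rw [← Fintype.sum_pow, ha1, one_pow]
  have hunion (n : ℕ) : 1 - ∑ k, ∑ f ∈ B k n, ∏ j, a (f j) ≤
      ∑ f : Fin n → ι with ∀ k, f ∉ B k n, ∏ j, a (f j) := by
    rw [sub_le_iff_le_add, ← htotal n,
      ← sum_filter_add_sum_filter_not univ (fun f => ∀ k, f ∉ B k n)]
    gcongr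
    simpa only [not_forall, not_not] using sum_filter_exists_mem_le hprod fun k => B k n
  have hlim : Tendsto (fun n => 1 - ∑ k, ∑ f ∈ B k n, ∏ j, a (f j)) atTop (𝓝 1) := by
    simpa using (tendsto_finsetSum univ fun k _ => hB k).const_sub 1
  refine tendsto_of_tendsto_of_tendsto_of_le_of_le hlim tendsto_const_nhds hunion fun n => ?_
  exact (sum_le_univ_sum_of_nonneg hprod).trans_eq (htotal n)

end ProductWeights

section RandomSubset

variable {Ω ι : Type*}

/-- The indicator of the event that every element of `S` is retained in the outcome `ω`, the
retained elements being those with value `true`. -/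
def retained (S : Finset Ω) (ω : Ω → Bool) : ℝ :=
  if ∀ x ∈ S, ω x = true then 1 else 0

lemma retained_union [DecidableEq Ω] (S T : Finset Ω) (ω : Ω → Bool) :
    retained (S ∪ T) ω = retained S ω * retained T ω := by
  simp only [retained, forall_mem_union, ite_and, mul_ite, mul_one, mul_zero]
  split_ifs <;> rfl

variable [Fintype Ω]

lemma sq_sum_mul_le_of_eq_zero {μ X : Ω → ℝ} (hμ : ∀ ω, 0 ≤ μ ω) {E : Finset Ω}
    (hX : ∀ ω ∉ E, X ω = 0) :
    (∑ ω, μ ω * X ω) ^ 2 ≤ (∑ ω, μ ω * X ω ^ 2) * ∑ ω ∈ E, μ ω := by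
  have hsupp : ∑ ω, μ ω * X ω = ∑ ω ∈ E, μ ω * X ω :=
    (sum_subset (subset_univ E) fun ω _ hω => by rw [hX ω hω, mul_zero]).symm
  have hsq (ω : Ω) : 0 ≤ μ ω * X ω ^ 2 := mul_nonneg (hμ ω) (sq_nonneg _)
  calc (∑ ω, μ ω * X ω) ^ 2 = (∑ ω ∈ E, μ ω * X ω) ^ 2 := by rw [hsupp]
    _ ≤ (∑ ω ∈ E, μ ω * X ω ^ 2) * ∑ ω ∈ E, μ ω :=
      sum_sq_le_sum_mul_sum_of_sq_le_mul E (fun ω _ => hsq ω) (fun ω _ => hμ ω)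
        fun ω _ => (by ring : (μ ω * X ω) ^ 2 = μ ω * X ω ^ 2 * μ ω).le
    _ ≤ (∑ ω, μ ω * X ω ^ 2) * ∑ ω ∈ E, μ ω :=
      mul_le_mul_of_nonneg_right (sum_le_univ_sum_of_nonneg hsq) (sum_nonneg fun ω _ => hμ ω)

/-- The probability of the outcome `ω` when each element of `Ω` is retained independently with
probability `p`. -/
def bernoulliWeight (p : ℝ) (ω : Ω → Bool) : ℝ :=
  ∏ x, if ω x = true then p else 1 - p

lemma bernoulliWeight_nonneg {p : ℝ} (hp0 : 0 ≤ p) (hp1 : p ≤ 1) (ω : Ω → Bool) :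
    0 ≤ bernoulliWeight p ω :=
  prod_nonneg fun _ _ => by split_ifs <;> linarith

lemma sum_bernoulliWeight_mul_retained [DecidableEq Ω] (p : ℝ) (S : Finset Ω) :
    ∑ ω, bernoulliWeight p ω * retained S ω = p ^ #S := by
  have hevent : ({ω | ∀ x ∈ S, ω x = true} : Finset (Ω → Bool)) =
      Fintype.piFinset fun x => if x ∈ S then {true} else univ := by
    ext ω
    simp only [mem_filter_univ, Fintype.mem_piFinset]
    refine forall_congr' fun x => ?_
    split_ifs with hx <;> simp [hx]
  have hmarginal (x : Ω) : ∑ b ∈ if x ∈ S then {true} else univ, (if b = true then p else 1 - p) =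
      if x ∈ S then p else 1 := by
    split_ifs <;> simp
  simp only [retained, mul_ite, mul_one, mul_zero, ← sum_filter, hevent, bernoulliWeight]
  rw [← prod_univ_sum (fun x => if x ∈ S then {true} else univ)
    (fun _ b => if b = true then p else 1 - p)]
  simp only [hmarginal, prod_ite_mem, univ_inter, prod_const]

lemma sum_bernoulliWeight [DecidableEq Ω] (p : ℝ) : ∑ ω : Ω → Bool, bernoulliWeight p ω = 1 := by
  simpa [retained] using sum_bernoulliWeight_mul_retained p (∅ : Finset Ω)

lemma sq_sum_mul_pow_card_le [DecidableEq Ω] {p : ℝ} (hp0 : 0 ≤ p) (hp1 : p ≤ 1) (s : Finset ι)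
    (w : ι → ℝ) (S : ι → Finset Ω) {E : Finset (Ω → Bool)}
    (hE : ∀ i ∈ s, ∀ ω, (∀ x ∈ S i, ω x = true) → ω ∈ E) :
    (∑ i ∈ s, w i * p ^ #(S i)) ^ 2 ≤
      (∑ i ∈ s, ∑ j ∈ s, w i * w j * p ^ #(S i ∪ S j)) * ∑ ω ∈ E, bernoulliWeight p ω := by
  let X (ω : Ω → Bool) : ℝ := ∑ i ∈ s, w i * retained (S i) ω
  have hmean : ∑ i ∈ s, w i * p ^ #(S i) = ∑ ω, bernoulliWeight p ω * X ω := by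
    simp only [X, ← sum_bernoulliWeight_mul_retained, mul_sum]
    rw [sum_comm]
    exact sum_congr rfl fun ω _ => sum_congr rfl fun i _ => mul_left_comm _ _ _
  have hsecond : ∑ i ∈ s, ∑ j ∈ s, w i * w j * p ^ #(S i ∪ S j) =
      ∑ ω, bernoulliWeight p ω * X ω ^ 2 := by
    simp only [X, ← sum_bernoulliWeight_mul_retained, retained_union, sq, sum_mul_sum]
    simp only [mul_sum]
    rw [sum_comm (s := univ)]
    refine sum_congr rfl fun i _ => ?_
    rw [sum_comm (s := univ)]
    exact sum_congr rfl fun j _ => sum_congr rfl fun ω _ => by ring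
  have hvanish (ω : Ω → Bool) (hω : ω ∉ E) : X ω = 0 :=
    sum_eq_zero fun i hi => by rw [retained, if_neg fun h => hω (hE i hi ω h), mul_zero]
  rw [hmean, hsecond]
  exact sq_sum_mul_le_of_eq_zero (bernoulliWeight_nonneg hp0 hp1) hvanish

end RandomSubset

section Shadow

variable {P : Type*} [Fintype P] [PartialOrder P] {α : Finset P → ℝ}

open Classical in
/-- The upper shadow `∂_Q A` as a finset. -/
noncomputable def shadowFinset (Q : Set P) (A : Finset P) : Finset P :=
  {y | y ∈ upperShadow Q (A : Set P)}

@[simp]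
lemma coe_shadowFinset (Q : Set P) (A : Finset P) :
    (shadowFinset Q A : Set P) = upperShadow Q (A : Set P) := by
  simp [shadowFinset]

lemma shadowFinset_mem_antichainsIn (Q : Set P) (A : Finset P) :
    shadowFinset Q A ∈ antichainsIn Q := by
  simp only [antichainsIn, antichains, mem_filter, mem_univ, true_and, coe_shadowFinset]
  refine ⟨fun x hx y hy hne hle => ?_, fun y hy => hy.1⟩
  obtain ⟨z, hz, hzx⟩ := hx.2.1
  exact hy.2.2 x hx.1 (hle.lt_of_ne hne) z hz hzx

lemma shadowFinset_congr {Q : Set P} {A B : Finset P}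
    (h : ∀ x ∈ Q, x ∈ upperClosure (A : Set P) ↔ x ∈ upperClosure (B : Set P)) :
    shadowFinset Q A = shadowFinset Q B := by
  simp only [mem_upperClosure] at h
  rw [← coe_inj, coe_shadowFinset, coe_shadowFinset]
  ext y
  refine and_congr_right fun hy => and_congr (h y hy) (forall₃_congr fun z hz _ => ?_)
  simpa using not_congr (h z hz)

lemma singleton_mem_antichains (x : P) : {x} ∈ antichains P := by
  simp [antichains]

namespace IsWeighting

lemma nonneg (hα : IsWeighting α) (A : Finset P) : 0 ≤ α A := by
  by_cases hA : A ∈ antichains P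
  · exact hα.1 A hA
  · exact (hα.2.1 A hA).ge

lemma sum_eq_one (hα : IsWeighting α) : ∑ A, α A = 1 := by
  rw [← hα.2.2]
  exact (sum_subset (subset_univ _) fun A _ hA => hα.2.1 A hA).symm

lemma prod_nonneg {n : ℕ} (hα : IsWeighting α) (f : Fin n → Finset P) : 0 ≤ ∏ i, α (f i) :=
  Finset.prod_nonneg fun i _ => hα.nonneg (f i)

lemma sum_prod_eq_one (hα : IsWeighting α) (n : ℕ) :
    ∑ f : Fin n → Finset P, ∏ i, α (f i) = 1 := by
  rw [← Fintype.sum_pow, hα.sum_eq_one, one_pow]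

lemma shadowWeight_eq_sum [DecidableEq P] (hα : IsWeighting α) (Q : Set P) (T : Finset P) :
    shadowWeight α Q T = ∑ A with shadowFinset Q A = T, α A := by
  simp only [shadowWeight, ← coe_shadowFinset, coe_inj, sum_filter]
  refine (sum_subset (subset_univ _) fun A _ hA => ?_).trans (by congr!)
  simp only [hα.2.1 A hA, ite_self]

lemma sum_mul_log_shadowWeight (hα : IsWeighting α) {Q : Finset P} (hQ : Q.Nonempty) :
    ∑ A, α A * Real.log (shadowWeight α Q (shadowFinset Q A)) = -(critExp α Q * #Q) := by
  classical
  have hcard : (#Q : ℝ) ≠ 0 := Nat.cast_ne_zero.2 hQ.card_ne_zero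
  rw [critExp, Set.ncard_coe_finset, div_mul_cancel₀ _ hcard, sum_neg_distrib, neg_neg,
    ← sum_fiberwise_of_maps_to fun A _ => shadowFinset_mem_antichainsIn (Q : Set P) A]
  refine sum_congr rfl fun T _ => ?_
  conv_rhs => rw [hα.shadowWeight_eq_sum, sum_mul]
  refine sum_congr rfl fun A hA => ?_
  rw [(mem_filter.1 hA).2, ← hα.shadowWeight_eq_sum]

end IsWeighting

end Shadow

section CriticalExponent

variable {P : Type*} [Fintype P] [PartialOrder P]

lemma continuous_critExp (Q : Set P) : Continuous fun α : Finset P → ℝ => critExp α Q := by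
  unfold critExp shadowWeight
  refine (continuous_finsetSum _ fun T _ => Continuous.neg ?_).div_const _
  exact Real.continuous_mul_log.comp (continuous_finsetSum _ fun A _ => continuous_apply A)

open Classical in
/-- The uniform weighting of the antichains of `P`. -/
noncomputable def uniformWeighting (P : Type*) [Fintype P] [PartialOrder P] (A : Finset P) : ℝ :=
  if A ∈ antichains P then (#(antichains P) : ℝ)⁻¹ else 0

lemma card_antichains_pos (P : Type*) [Fintype P] [PartialOrder P] :
    (0 : ℝ) < #(antichains P) :=
  Nat.cast_pos.2 (card_pos.2 ⟨∅, by simp [antichains]⟩)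

lemma uniformWeighting_pos {A : Finset P} (hA : A ∈ antichains P) : 0 < uniformWeighting P A := by
  rw [uniformWeighting, if_pos hA]
  exact inv_pos.2 (card_antichains_pos P)

lemma isWeighting_uniformWeighting : IsWeighting (uniformWeighting P) := by
  refine ⟨fun A hA => (uniformWeighting_pos hA).le, fun A hA => if_neg hA, ?_⟩
  rw [sum_congr rfl fun A hA => by rw [uniformWeighting, if_pos hA], sum_const, nsmul_eq_mul,
    mul_inv_cancel₀ (card_antichains_pos P).ne']

lemma IsWeighting.lineMap {α β : Finset P → ℝ} (hα : IsWeighting α) (hβ : IsWeighting β) {t : ℝ}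
    (ht : t ∈ Set.Icc 0 1) : IsWeighting (AffineMap.lineMap α β t) := by
  obtain ⟨ht0, ht1⟩ := ht
  have happly (A : Finset P) : AffineMap.lineMap α β t A = (1 - t) * α A + t * β A := by
    simp [AffineMap.lineMap_apply_module]
  refine ⟨fun A _ => ?_, fun A hA => ?_, ?_⟩
  · rw [happly]
    exact add_nonneg (mul_nonneg (sub_nonneg.2 ht1) (hα.nonneg A)) (mul_nonneg ht0 (hβ.nonneg A))
  · rw [happly, hα.2.1 A hA, hβ.2.1 A hA, mul_zero, mul_zero, add_zero]
  · simp only [happly, sum_add_distrib, ← mul_sum, hα.2.2, hβ.2.2]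
    ring

lemma IsWeighting.exists_pos_mem {α : Finset P → ℝ} (hα : IsWeighting α)
    {U : Set (Finset P → ℝ)} (hU : U ∈ 𝓝 α) :
    ∃ β ∈ U, IsWeighting β ∧ ∀ A ∈ antichains P, 0 < β A := by
  have hline : Tendsto (AffineMap.lineMap α (uniformWeighting P)) (𝓝[>] (0 : ℝ)) (𝓝 α) := by
    simpa using (AffineMap.lineMap_continuous (R := ℝ) (p := α)
      (q := uniformWeighting P)).continuousWithinAt (s := Set.Ioi 0) (x := 0) |>.tendsto
  obtain ⟨t, htU, ht0, ht1⟩ :=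
    ((hline.eventually_mem hU).and (Ioo_mem_nhdsGT (zero_lt_one' ℝ))).exists
  refine ⟨_, htU, hα.lineMap isWeighting_uniformWeighting ⟨ht0.le, ht1.le⟩, fun A hA => ?_⟩
  simp only [AffineMap.lineMap_apply_module, Pi.add_apply, Pi.smul_apply, smul_eq_mul]
  exact add_pos_of_nonneg_of_pos (mul_nonneg (sub_nonneg.2 ht1.le) (hα.nonneg A))
    (mul_pos ht0 (uniformWeighting_pos hA))

lemma exists_isWeighting_of_lt_critStar {c : ℝ} (hc0 : 0 ≤ c) (hc : c < critStar P) :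
    ∃ h > c, ∃ α : Finset P → ℝ, IsWeighting α ∧ (∀ A ∈ antichains P, 0 < α A) ∧
      ∀ Q : Set P, Q.Nonempty → h < critExp α Q := by
  obtain ⟨c', ⟨-, α, hα, hαQ⟩, hc'⟩ : ∃ c' ∈ {c : ℝ | 0 ≤ c ∧ ∃ α : Finset P → ℝ,
      IsWeighting α ∧ ∀ Q : Set P, Q.Nonempty → c ≤ critExp α Q}, c < c' := by
    contrapose! hc
    exact Real.sSup_le hc hc0
  obtain ⟨h, hch, hhc'⟩ := exists_between hc'
  have hU : {β : Finset P → ℝ | ∀ Q : Set P, Q.Nonempty → h < critExp β Q} ∈ 𝓝 α :=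
    eventually_all.2 fun Q => eventually_imp_distrib_left.2 fun hQ =>
      ((continuous_critExp Q).tendsto α).eventually_const_lt (hhc'.trans_le (hαQ Q hQ))
  obtain ⟨β, hβQ, hβ, hβpos⟩ := hα.exists_pos_mem hU
  exact ⟨h, hch, β, hβ, hβpos, hβQ⟩

end CriticalExponent

section CubeMap

variable {P : Type*} [PartialOrder P] {n : ℕ}

open Classical in
/-- The map from `P` to the cube given by a tuple `f` of subsets of `P`: coordinate `i` is in the
image of `x` when `x` lies above some element of `f i`. -/
noncomputable def cubeMap (f : Fin n → Finset P) (x : P) : Finset (Fin n) :=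
  {i | x ∈ upperClosure (f i : Set P)}

lemma mem_cubeMap {f : Fin n → Finset P} {x : P} {i : Fin n} :
    i ∈ cubeMap f x ↔ x ∈ upperClosure (f i : Set P) := by
  simp [cubeMap]

lemma cubeMap_subset_cubeMap_iff {f : Fin n → Finset P} (hf : ∀ x, ∃ i, f i = {x}) {x y : P} :
    cubeMap f x ⊆ cubeMap f y ↔ x ≤ y := by
  refine ⟨fun hsub => ?_, fun hxy i hi => ?_⟩
  · obtain ⟨i, hi⟩ := hf x
    have hy : i ∈ cubeMap f y := hsub (by simp [mem_cubeMap, hi])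
    simpa [mem_cubeMap, hi] using hy
  · exact mem_cubeMap.2 ((upperClosure (f i : Set P)).upper hxy (mem_cubeMap.1 hi))

lemma cubeMap_injective {f : Fin n → Finset P} (hf : ∀ x, ∃ i, f i = {x}) :
    Function.Injective (cubeMap f) :=
  (OrderEmbedding.ofMapLEIff (cubeMap f) fun _ _ => cubeMap_subset_cubeMap_iff hf).injective

variable [Fintype P]

lemma shadowFinset_eq_of_cubeMap_eq {Q : Set P} {f g : Fin n → Finset P}
    (h : ∀ x ∈ Q, cubeMap f x = cubeMap g x) (i : Fin n) :
    shadowFinset Q (f i) = shadowFinset Q (g i) :=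
  shadowFinset_congr fun x hx => by rw [← mem_cubeMap, ← mem_cubeMap, h x hx]

lemma IsWeighting.sum_prod_filter_cubeMap_eq_le {α : Finset P → ℝ} (hα : IsWeighting α)
    (Q : Finset P) (g : Fin n → Finset P) :
    ∑ f : Fin n → Finset P with ∀ x ∈ Q, cubeMap f x = cubeMap g x, ∏ i, α (f i) ≤
      ∏ i, shadowWeight α Q (shadowFinset Q (g i)) := by
  have hshadow : ∀ f ∈ ({f | ∀ x ∈ Q, cubeMap f x = cubeMap g x} : Finset (Fin n → Finset P)),
      ∀ i, shadowFinset Q (f i) = shadowFinset Q (g i) := fun f hf =>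
    shadowFinset_eq_of_cubeMap_eq (mem_filter.1 hf).2
  classical
  simp only [hα.shadowWeight_eq_sum, prod_univ_sum]
  refine sum_le_sum_of_subset_of_nonneg (fun f hf => ?_) fun f _ _ => hα.prod_nonneg f
  simpa only [Fintype.mem_piFinset, mem_filter_univ] using hshadow f hf

end CubeMap

section GoodTuples

variable {P : Type*} [Fintype P] [PartialOrder P] {α : Finset P → ℝ} {p q : ℝ} {n : ℕ}

open Classical in
/-- The tuples `f` for which `cubeMap f` is an order embedding, because every singleton occurs in
`f`, and which are typical for `α` at level `q`: for each `Q ≠ ∅`, a tuple drawn independently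
from `α` has the same shadows in `Q` as `f` with probability at most `q ^ |Q|`. -/
noncomputable def goodTuples (α : Finset P → ℝ) (q : ℝ) (n : ℕ) : Finset (Fin n → Finset P) :=
  {f | (∀ Q : Finset P, Q.Nonempty →
      ∏ i, shadowWeight α Q (shadowFinset Q (f i)) ≤ q ^ #Q) ∧ ∀ x, ∃ i, f i = {x}}

lemma mem_goodTuples {f : Fin n → Finset P} :
    f ∈ goodTuples α q n ↔ (∀ Q : Finset P, Q.Nonempty →
      ∏ i, shadowWeight α Q (shadowFinset Q (f i)) ≤ q ^ #Q) ∧ ∀ x, ∃ i, f i = {x} := by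
  simp [goodTuples]

lemma exists_eq_singleton_of_mem_goodTuples {f : Fin n → Finset P} (hf : f ∈ goodTuples α q n)
    (x : P) : ∃ i, f i = {x} :=
  (mem_goodTuples.1 hf).2 x

/-- The probability that a tuple drawn independently from `α` is good. -/
noncomputable def goodWeight (α : Finset P → ℝ) (q : ℝ) (n : ℕ) : ℝ :=
  ∑ f ∈ goodTuples α q n, ∏ i, α (f i)

lemma IsWeighting.goodWeight_nonneg (hα : IsWeighting α) : 0 ≤ goodWeight α q n :=
  sum_nonneg fun f _ => hα.prod_nonneg f

lemma IsWeighting.tendsto_goodWeight (hα : IsWeighting α) (hpos : ∀ x : P, 0 < α {x}) {h : ℝ}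
    (hQ : ∀ Q : Set P, Q.Nonempty → h < critExp α Q) :
    Tendsto (fun n : ℕ => goodWeight α (Real.exp (-(h * n))) n) atTop (𝓝 1) := by
  classical
  let atypical (Q : Finset P) (n : ℕ) : Finset (Fin n → Finset P) :=
    {f | Real.exp (-(h * #Q * n)) < ∏ i, shadowWeight α Q (shadowFinset Q (f i))}
  let missing (x : P) (n : ℕ) : Finset (Fin n → Finset P) := {f | ∀ i, f i ≠ {x}}
  let bad : {Q : Finset P // Q.Nonempty} ⊕ P → ∀ n, Finset (Fin n → Finset P) :=
    Sum.elim (fun Q => atypical Q) missing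
  have hatypical (Q : Finset P) (hQne : Q.Nonempty) :
      Tendsto (fun n => ∑ f ∈ atypical Q n, ∏ i, α (f i)) atTop (𝓝 0) := by
    refine tendsto_sum_prod_filter_exp_lt_prod (t := h * #Q)
      (b := fun A => shadowWeight α Q (shadowFinset Q A)) hα.nonneg hα.sum_eq_one ?_
    have hQh : h < critExp α Q := hQ Q (coe_nonempty.2 hQne)
    rw [hα.sum_mul_log_shadowWeight hQne]
    exact neg_lt_neg (mul_lt_mul_of_pos_right hQh (Nat.cast_pos.2 hQne.card_pos))
  have hmissing (x : P) : Tendsto (fun n => ∑ f ∈ missing x n, ∏ i, α (f i)) atTop (𝓝 0) :=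
    tendsto_sum_prod_filter_forall_ne hα.nonneg hα.sum_eq_one (hpos x)
  have hbad : ∀ k, Tendsto (fun n => ∑ f ∈ bad k n, ∏ i, α (f i)) atTop (𝓝 0) :=
    Sum.rec (fun Q => hatypical Q.1 Q.2) hmissing
  have hgood (n : ℕ) : goodTuples α (Real.exp (-(h * n))) n =
      ({f | ∀ k, f ∉ bad k n} : Finset (Fin n → Finset P)) := by
    have hexp (Q : Finset P) : Real.exp (-(h * n)) ^ #Q = Real.exp (-(h * #Q * n)) := by
      rw [← Real.exp_nat_mul]
      ring_nf
    ext f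
    simp only [mem_goodTuples, mem_filter_univ, bad, atypical, missing, Sum.forall, Sum.elim_inl,
      Sum.elim_inr, Subtype.forall, not_lt, not_forall, not_not, hexp]
  simp only [goodWeight, hgood]
  exact tendsto_sum_prod_filter_forall_notMem hα.nonneg hα.sum_eq_one hbad

lemma IsWeighting.sum_goodTuples_filter_restrict_eq_le (hα : IsWeighting α) (hq : 0 ≤ q)
    (Q : Finset P) (r : Q → Finset (Fin n)) :
    ∑ f ∈ goodTuples α q n with Q.restrict (cubeMap f) = r, ∏ i, α (f i) ≤ q ^ #Q := by
  rcases Q.eq_empty_or_nonempty with rfl | hQ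
  · rw [card_empty, pow_zero, ← hα.sum_prod_eq_one n]
    exact sum_le_univ_sum_of_nonneg hα.prod_nonneg
  rcases {f ∈ goodTuples α q n | Q.restrict (cubeMap f) = r}.eq_empty_or_nonempty with
    hempty | ⟨g, hg⟩
  · rw [hempty, sum_empty]
    positivity
  obtain ⟨hgood, rfl⟩ := mem_filter.1 hg
  calc ∑ f ∈ goodTuples α q n with Q.restrict (cubeMap f) = Q.restrict (cubeMap g), ∏ i, α (f i)
      ≤ ∑ f : Fin n → Finset P with ∀ x ∈ Q, cubeMap f x = cubeMap g x, ∏ i, α (f i) := by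
        refine sum_le_sum_of_subset_of_nonneg (fun f hf => ?_) fun f _ _ => hα.prod_nonneg f
        simpa [funext_iff] using (mem_filter.1 hf).2
    _ ≤ ∏ i, shadowWeight α Q (shadowFinset Q (g i)) := hα.sum_prod_filter_cubeMap_eq_le Q g
    _ ≤ q ^ #Q := (mem_goodTuples.1 hgood).1 Q hQ

/-- The elements of `P` that `cubeMap f` sends into the family `𝒮`, for instance into another copy
of `P`. -/
noncomputable def overlap (𝒮 : Finset (Finset (Fin n))) (f : Fin n → Finset P) : Finset P :=
  {x | cubeMap f x ∈ 𝒮}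

lemma IsWeighting.sum_goodTuples_filter_overlap_eq_le [DecidableEq P] (hα : IsWeighting α)
    (hq : 0 ≤ q) (𝒮 : Finset (Finset (Fin n))) (Q : Finset P) :
    ∑ f ∈ goodTuples α q n with overlap 𝒮 f = Q, ∏ i, α (f i) ≤ (#𝒮 * q) ^ #Q := by
  have hmaps : ∀ f ∈ {f ∈ goodTuples α q n | overlap 𝒮 f = Q},
      Q.restrict (cubeMap f) ∈ Fintype.piFinset fun _ : Q => 𝒮 := by
    intro f hf
    obtain ⟨-, rfl⟩ := mem_filter.1 hf
    exact Fintype.mem_piFinset.2 fun x => (mem_filter.1 x.2).2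
  rw [← sum_fiberwise_of_maps_to hmaps]
  calc ∑ r ∈ Fintype.piFinset fun _ : Q => 𝒮,
        ∑ f ∈ {f ∈ goodTuples α q n | overlap 𝒮 f = Q} with Q.restrict (cubeMap f) = r,
          ∏ i, α (f i)
      ≤ ∑ _ ∈ Fintype.piFinset fun _ : Q => 𝒮, q ^ #Q := by
        refine sum_le_sum fun r _ => le_trans ?_
          (hα.sum_goodTuples_filter_restrict_eq_le hq Q r)
        exact sum_le_sum_of_subset_of_nonneg (filter_subset_filter _ (filter_subset _ _))
          fun f _ _ => hα.prod_nonneg f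
    _ = (#𝒮 * q) ^ #Q := by
        rw [sum_const, Fintype.card_piFinset, prod_const, card_univ, Fintype.card_coe,
          nsmul_eq_mul, Nat.cast_pow, mul_pow]

lemma IsWeighting.sum_goodTuples_mul_inv_pow_overlap_le (hα : IsWeighting α) (hp : 0 < p)
    (hq : 0 ≤ q) (𝒮 : Finset (Finset (Fin n))) :
    ∑ f ∈ goodTuples α q n, (∏ i, α (f i)) * (p ^ #(overlap 𝒮 f))⁻¹ ≤
      (1 + #𝒮 * q / p) ^ Fintype.card P := by
  classical
  rw [← sum_fiberwise (goodTuples α q n) (overlap 𝒮)]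
  calc ∑ Q, ∑ f ∈ goodTuples α q n with overlap 𝒮 f = Q,
        (∏ i, α (f i)) * (p ^ #(overlap 𝒮 f))⁻¹
      ≤ ∑ Q : Finset P, (#𝒮 * q / p) ^ #Q := by
        refine sum_le_sum fun Q _ => ?_
        rw [sum_congr rfl fun f hf => by rw [(mem_filter.1 hf).2], ← sum_mul, div_pow,
          div_eq_mul_inv]
        gcongr
        exact hα.sum_goodTuples_filter_overlap_eq_le hq 𝒮 Q
    _ = (1 + #𝒮 * q / p) ^ Fintype.card P := by
        rw [add_comm, ← Fintype.sum_pow_mul_eq_add_pow]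
        simp only [one_pow, mul_one]

/-- The induced copy of `P` in the cube given by a good tuple `f`. -/
noncomputable def copyOf (f : Fin n → Finset P) : Finset (Finset (Fin n)) :=
  univ.image (cubeMap f)

lemma card_copyOf {f : Fin n → Finset P} (hf : f ∈ goodTuples α q n) :
    #(copyOf f) = Fintype.card P :=
  card_image_of_injective _ (cubeMap_injective (exists_eq_singleton_of_mem_goodTuples hf))

lemma card_copyOf_union_add_card_overlap {f g : Fin n → Finset P} (hf : f ∈ goodTuples α q n)
    (hg : g ∈ goodTuples α q n) :
    #(copyOf f ∪ copyOf g) + #(overlap (copyOf f) g) = 2 * Fintype.card P := by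
  have hinter : copyOf f ∩ copyOf g = (overlap (copyOf f) g).image (cubeMap g) := by
    ext X
    simp only [copyOf, overlap, mem_inter, mem_image, mem_univ, true_and, mem_filter_univ]
    constructor
    · rintro ⟨hX, x, rfl⟩
      exact ⟨x, hX, rfl⟩
    · rintro ⟨x, hx, rfl⟩
      exact ⟨hx, x, rfl⟩
  rw [← card_image_of_injective (overlap (copyOf f) g)
    (cubeMap_injective (exists_eq_singleton_of_mem_goodTuples hg)), ← hinter,
    card_union_add_card_inter, card_copyOf hf, card_copyOf hg, two_mul]

lemma IsWeighting.sum_goodTuples_mul_pow_card_union_le (hα : IsWeighting α) (hp : 0 < p)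
    (hq : 0 ≤ q) :
    ∑ f ∈ goodTuples α q n, ∑ g ∈ goodTuples α q n,
        (∏ i, α (f i)) * (∏ i, α (g i)) * p ^ #(copyOf f ∪ copyOf g) ≤
      p ^ (2 * Fintype.card P) * goodWeight α q n *
        (1 + Fintype.card P * q / p) ^ Fintype.card P := by
  rw [goodWeight, mul_sum, sum_mul]
  refine sum_le_sum fun f hf => ?_
  have hpow : ∀ g ∈ goodTuples α q n, p ^ #(copyOf f ∪ copyOf g) =
      p ^ (2 * Fintype.card P) * (p ^ #(overlap (copyOf f) g))⁻¹ := fun g hg => by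
    rw [← card_copyOf_union_add_card_overlap hf hg, pow_add,
      mul_inv_cancel_right₀ (pow_pos hp _).ne']
  calc ∑ g ∈ goodTuples α q n, (∏ i, α (f i)) * (∏ i, α (g i)) * p ^ #(copyOf f ∪ copyOf g)
      = p ^ (2 * Fintype.card P) * (∏ i, α (f i)) *
          ∑ g ∈ goodTuples α q n, (∏ i, α (g i)) * (p ^ #(overlap (copyOf f) g))⁻¹ := by
        rw [mul_sum]
        refine sum_congr rfl fun g hg => ?_
        rw [hpow g hg]
        ring
    _ ≤ p ^ (2 * Fintype.card P) * (∏ i, α (f i)) *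
          (1 + Fintype.card P * q / p) ^ Fintype.card P := by
        rw [← card_copyOf hf]
        exact mul_le_mul_of_nonneg_left
          (card_copyOf hf ▸ hα.sum_goodTuples_mul_inv_pow_overlap_le hp hq (copyOf f))
          (mul_nonneg (pow_nonneg hp.le _) (hα.prod_nonneg f))

/-- The event that the retained sets contain an induced copy of `P`. -/
def inducedCopyEvent (P : Type*) [PartialOrder P] (n : ℕ) : Set (Finset (Fin n) → Bool) :=
  {ω | ∃ φ : P → Finset (Fin n), Function.Injective φ ∧ (∀ x y : P, φ x ⊆ φ y ↔ x ≤ y) ∧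
    ∀ i, ω (φ i) = true}

lemma mem_inducedCopyEvent {f : Fin n → Finset P} (hf : f ∈ goodTuples α q n)
    {ω : Finset (Fin n) → Bool} (hω : ∀ X ∈ copyOf f, ω X = true) : ω ∈ inducedCopyEvent P n :=
  have hsingle := exists_eq_singleton_of_mem_goodTuples hf
  ⟨cubeMap f, cubeMap_injective hsingle, fun _ _ => cubeMap_subset_cubeMap_iff hsingle,
    fun x => hω _ (mem_image_of_mem _ (mem_univ x))⟩

lemma cubeProb_nonneg (hp0 : 0 ≤ p) (hp1 : p ≤ 1) (E : Set (Finset (Fin n) → Bool)) :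
    0 ≤ cubeProb n p E :=
  sum_nonneg fun ω _ => bernoulliWeight_nonneg hp0 hp1 ω

lemma cubeProb_le_one (hp0 : 0 ≤ p) (hp1 : p ≤ 1) (E : Set (Finset (Fin n) → Bool)) :
    cubeProb n p E ≤ 1 :=
  (sum_le_univ_sum_of_nonneg (bernoulliWeight_nonneg hp0 hp1)).trans_eq
    (sum_bernoulliWeight p)

lemma IsWeighting.goodWeight_div_le_cubeProb (hα : IsWeighting α) (hp0 : 0 < p) (hp1 : p ≤ 1)
    (hq : 0 ≤ q) :
    goodWeight α q n / (1 + Fintype.card P * q / p) ^ Fintype.card P ≤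
      cubeProb n p (inducedCopyEvent P n) := by
  classical
  have hmean : ∑ f ∈ goodTuples α q n, (∏ i, α (f i)) * p ^ #(copyOf f) =
      goodWeight α q n * p ^ Fintype.card P := by
    rw [goodWeight, sum_mul]
    exact sum_congr rfl fun f hf => by rw [card_copyOf hf]
  have hcopy : ∀ f ∈ goodTuples α q n, ∀ ω, (∀ X ∈ copyOf f, ω X = true) →
      ω ∈ ({ω | ω ∈ inducedCopyEvent P n} : Finset (Finset (Fin n) → Bool)) := fun f hf ω hω =>
    mem_filter.2 ⟨mem_univ ω, mem_inducedCopyEvent hf hω⟩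
  have hsecond := (sq_sum_mul_pow_card_le hp0.le hp1 _ _ copyOf hcopy).trans
    (mul_le_mul_of_nonneg_right (hα.sum_goodTuples_mul_pow_card_union_le hp0 hq)
      (sum_nonneg fun ω _ => bernoulliWeight_nonneg hp0.le hp1 ω))
  have hprob : ∑ ω with ω ∈ inducedCopyEvent P n, bernoulliWeight p ω =
      cubeProb n p (inducedCopyEvent P n) := by
    unfold cubeProb bernoulliWeight
    congr!
  rw [hmean, hprob] at hsecond
  rw [div_le_iff₀ (by positivity)]
  rcases hα.goodWeight_nonneg.eq_or_lt with hW | hW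
  · rw [← hW]
    exact mul_nonneg (cubeProb_nonneg hp0.le hp1 _) (by positivity)
  · refine le_of_mul_le_mul_left ?_ (mul_pos (pow_pos hp0 (2 * Fintype.card P)) hW)
    linear_combination hsecond

end GoodTuples

/-- 1-statement of the existence threshold: if `0 < c < c_⋆(P)` and `p = e^{-cn}`, then
w.h.p. the random poset `𝒫(n,p)` contains an induced copy of `P`, i.e. the probability
that there is an injective map `φ` from `P` to the retained elements of `𝒫(n)` with
`φ x ⊆ φ y ↔ x ≤ y` tends to `1` as `n → ∞`. -/
theorem stmt7 (P : Type) [Fintype P] [PartialOrder P] [Nonempty P]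
    (c : ℝ) (hc0 : 0 < c) (hc : c < critStar P) :
    Filter.Tendsto (fun n : ℕ =>
        cubeProb n (Real.exp (-(c * n)))
          {ω : Finset (Fin n) → Bool | ∃ φ : P → Finset (Fin n),
            Function.Injective φ ∧ (∀ x y : P, φ x ⊆ φ y ↔ x ≤ y) ∧
              ∀ i, ω (φ i) = true})
      Filter.atTop (nhds 1) := by
  obtain ⟨h, hch, α, hα, hpos, hQ⟩ := exists_isWeighting_of_lt_critStar hc0.le hc
  have hp1 (n : ℕ) : Real.exp (-(c * n)) ≤ 1 :=
    Real.exp_le_one_iff.2 (neg_nonpos.2 (mul_nonneg hc0.le n.cast_nonneg))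
  have hgood := hα.tendsto_goodWeight (fun x => hpos _ (singleton_mem_antichains x)) hQ
  have hratio : Tendsto (fun n : ℕ => Fintype.card P * Real.exp (-(h * n)) / Real.exp (-(c * n)))
      atTop (𝓝 0) := by
    have hgap : Tendsto (fun n : ℕ => (h - c) * n) atTop atTop :=
      tendsto_natCast_atTop_atTop.const_mul_atTop (sub_pos.2 hch)
    have hexp (n : ℕ) : -(h * n) - -(c * n) = -((h - c) * n) := by ring
    simp only [mul_div_assoc, ← Real.exp_sub, hexp]
    simpa only [Function.comp_def, mul_zero] using
      (Real.tendsto_exp_neg_atTop_nhds_zero.comp hgap).const_mul (Fintype.card P : ℝ)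
  have hlower := hgood.div ((hratio.const_add 1).pow (Fintype.card P)) (by simp)
  rw [add_zero, one_pow, div_one] at hlower
  exact tendsto_of_tendsto_of_tendsto_of_le_of_le hlower tendsto_const_nhds
    (fun n => hα.goodWeight_div_le_cubeProb (Real.exp_pos _) (hp1 n) (Real.exp_pos _).le)
    (fun n => cubeProb_le_one (Real.exp_pos _).le (hp1 n) _)
end
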